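/- For a real number a and a natural number j, define g_j^a(x) = \frac{(-1)^j}{j!} \prod_{i=0}^{j-1} (x + (a+i)^2). For real a, b, c, d, define the Wilson polynomials w_n^{a,b,c,d}(x) = \sum_{j=0}^n \frac{(a+b+j)_{n-j} (a+c+j)_{n-j} (a+d+j)_{n-j}}{(n-j)! \, (n+a+b+c+d-1+j)_{n-j}} \, g_j^a(x) (well defined whenever the Pochhammer symbols in the denominators are nonzero), and the normalized Casorati Wilson determinant W^{a,b,c,d}_{n,m,x} = \det\big( w^{a,b,c,d}_{m+j-1}(-(x+i-1)^2) \big)_{i,j=1}^n \big/ \prod_{l=1}^{n-1} (2x+l)_l. Let n, m be natural numbers, write h = (n+m)/2, and let x, a, b, c, d be real numbers such that a+b+c+d is not an integer, \prod_{l=1}^{n-1} (2(x+a-h)+l)_l \ne 0 and \prod_{l=1}^{m-1} (2(-x-a+1)+l)_l \ne 0. Then: W^{a-h, \, b-h, \, c-h, \, d-h}_{n, m, \, x+a-h} = W^{-d+1, \, -b+1, \, -a+1, \, -c+1}_{m, n, \, -x-a+1}. -/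

import Mathlib

/-- The Pochhammer symbol `(y)_l = y (y+1) ⋯ (y+l-1)`. -/
noncomputable def poch (y : ℝ) (l : ℕ) : ℝ := ∏ k ∈ Finset.range l, (y + k)

/-- The polynomial `g_j^a(x) = ((-1)^j/j!) ∏_{i=0}^{j-1} (x + (a+i)^2)`. -/
noncomputable def gpol (a : ℝ) (j : ℕ) (x : ℝ) : ℝ :=
  ((-1 : ℝ) ^ j / j.factorial) * ∏ i ∈ Finset.range j, (x + (a + i) ^ 2)

/-- The Wilson polynomial `w_n^{a,b,c,d}(x)`. -/
noncomputable def wilson (a b c d : ℝ) (n : ℕ) (x : ℝ) : ℝ :=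
  ∑ j ∈ Finset.range (n + 1),
    (poch (a + b + j) (n - j) * poch (a + c + j) (n - j) * poch (a + d + j) (n - j) /
      ((n - j).factorial * poch (n + a + b + c + d - 1 + j) (n - j))) *
    gpol a j x

/-- The normalized Casorati Wilson determinant `W^{a,b,c,d}_{n,m,x}`. -/
noncomputable def wilsonCasorati (a b c d : ℝ) (n m : ℕ) (x : ℝ) : ℝ :=
  Matrix.det (Matrix.of fun i j : Fin n =>
    wilson a b c d (m + (j : ℕ)) (-(x + (i : ℕ)) ^ 2)) /
  ∏ l ∈ Finset.Icc 1 (n - 1), poch (2 * x + l) l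


open Finset

lemma poch_zero (y : ℝ) : poch y 0 = 1 := by simp [poch]

lemma poch_succ (y : ℝ) (l : ℕ) : poch y (l + 1) = poch y l * (y + l) := by
  simp [poch, Finset.prod_range_succ]

lemma poch_add (y : ℝ) (k l : ℕ) : poch y (k + l) = poch y k * poch (y + k) l := by
  simp only [poch, Finset.prod_range_add]
  congr 1
  apply Finset.prod_congr rfl
  intro i _
  push_cast; ring

lemma poch_succ' (y : ℝ) (l : ℕ) : poch y (l + 1) = y * poch (y + 1) l := by
  rw [add_comm l 1, poch_add]
  simp [poch]

lemma poch_reflect (y : ℝ) (l : ℕ) : poch (1 - y - l) l = (-1) ^ l * poch y l := by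
  unfold poch
  have h1 : (-1 : ℝ) ^ l = ∏ k ∈ Finset.range l, (-1 : ℝ) := by simp
  rw [← Finset.prod_range_reflect, h1, ← Finset.prod_mul_distrib]
  apply Finset.prod_congr rfl
  intro i hi
  have : i + 1 ≤ l := by simpa [Nat.succ_le_iff] using hi
  have h : ((l - 1 - i : ℕ) : ℝ) = l - 1 - i := by
    rw [Nat.sub_sub, Nat.cast_sub (by omega)]; push_cast; ring
  rw [h]; ring

lemma poch_ne (y : ℝ) (l : ℕ) (h : ∀ z : ℤ, y ≠ z) : poch y l ≠ 0 := by
  unfold poch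
  rw [Finset.prod_ne_zero_iff]
  intro k _ h0
  apply h (-(k : ℤ))
  push_cast
  linarith

lemma gpol_succ (a : ℝ) (n : ℕ) (z : ℝ) :
    ((n : ℝ) + 1) * gpol a (n + 1) z = - (z + (a + n) ^ 2) * gpol a n z := by
  unfold gpol
  rw [Finset.prod_range_succ, Nat.factorial_succ]
  have : (n.factorial : ℝ) ≠ 0 := by positivity
  have : (n : ℝ) + 1 ≠ 0 := by positivity
  push_cast
  field_simp
  ring

lemma gpol_poch (a x : ℝ) (k : ℕ) :
    gpol a k (-x ^ 2) = (-1) ^ k / k.factorial * (poch (a - x) k * poch (a + x) k) := by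
  unfold gpol poch
  rw [← Finset.prod_mul_distrib]
  congr 1
  apply Finset.prod_congr rfl
  intro i _
  ring

lemma gpol_shift (a x : ℝ) (p : ℝ) (k : ℕ) :
    gpol (a + p / 2) k (-(x + p / 2) ^ 2) =
      (-1) ^ k / k.factorial * (poch (a - x) k * poch (a + x + p) k) := by
  rw [gpol_poch]
  congr 3 <;> ring

lemma gpol_newton (a x z : ℝ) (n : ℕ) :
    gpol a n z = ∑ p ∈ range (n + 1),
      gpol (a + p / 2) (n - p) (-(x + p / 2) ^ 2) * gpol x p z := by
  induction n with
  | zero => simp [gpol]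
  | succ n ih =>
    have hn : (n : ℝ) + 1 ≠ 0 := by positivity
    apply mul_left_cancel₀ hn
    rw [gpol_succ, ih, Finset.mul_sum, Finset.mul_sum]
    simp only [gpol_shift]
    set c : ℕ → ℕ → ℝ := fun p k =>
      (-1) ^ k / k.factorial * (poch (a - x) k * poch (a + x + p) k) with hc
    have key : ∀ p ∈ range (n + 1), -(z + (a + n) ^ 2) * (c p (n - p) * gpol x p z) =
        ((p + 1 : ℕ) : ℝ) * c p (n - p) * gpol x (p + 1) z
        - (a - x + n - p) * (a + x + n + p) * c p (n - p) * gpol x p z := by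
      intro p _
      have := gpol_succ x p z
      push_cast
      linear_combination -c p (n - p) * this
    have key2 : ∀ p ∈ range (n + 1), ((n : ℝ) + 1) * (c p (n + 1 - p) * gpol x p z) =
        (p : ℝ) * c (p - 1) (n - (p - 1)) * gpol x p z
        - (a - x + n - p) * (a + x + n + p) * c p (n - p) * gpol x p z := by
      intro p hp
      have hp' : p ≤ n := by simpa [Nat.lt_succ_iff] using hp
      obtain ⟨k, rfl⟩ := Nat.exists_eq_add_of_le hp'
      have e1 : p + k + 1 - p = k + 1 := by omega
      have e2 : p + k - p = k := by omega
      have hk : (k.factorial : ℝ) ≠ 0 := by positivity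
      have hk1 : (k : ℝ) + 1 ≠ 0 := by positivity
      rw [e1, e2]
      rcases p with _ | p
      · simp only [hc, poch_succ, Nat.factorial_succ]
        push_cast
        field_simp
        ring
      · have e3 : p + 1 + k - (p + 1 - 1) = k + 1 := by omega
        rw [e3]
        simp only [hc, Nat.factorial_succ, Nat.add_sub_cancel]
        rw [poch_succ (a - x), poch_succ' (a + x + p), poch_succ (a + x + ((p + 1 : ℕ) : ℝ))]
        push_cast
        rw [show a + x + (p : ℝ) + 1 = a + x + (p + 1) by ring]
        field_simp
        ring
    rw [Finset.sum_congr rfl key, Finset.sum_range_succ _ (n + 1), Finset.sum_congr rfl key2,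
      Finset.sum_sub_distrib, Finset.sum_sub_distrib]
    have := Finset.sum_range_succ' (fun p => (p : ℝ) * c (p - 1) (n - (p - 1)) * gpol x p z) (n + 1)
    rw [Finset.sum_range_succ] at this
    simp only [Nat.add_sub_cancel] at this
    have e : (-1 : ℝ) ^ (n + 1 - (n + 1)) / ((n + 1 - (n + 1)).factorial : ℝ) *
        (poch (a - x) (n + 1 - (n + 1)) * poch (a + x + ((n + 1 : ℕ) : ℝ)) (n + 1 - (n + 1))) = 1 := by
      simp [poch]
    have e' : c n (n - n) = 1 := by simp [hc, poch]
    rw [e'] at this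
    rw [e]
    push_cast at this ⊢
    linear_combination -this

lemma saal (al be ga : ℝ) (n : ℕ) :
    ∑ j ∈ range (n + 1), (-1) ^ j * (n.choose j : ℝ) * poch al j * poch (be + j) (n - j) *
      poch (ga + j) (n - j) * poch (be + ga - al - 1 + n) j =
    poch (be - al) n * poch (ga - al) n := by
  induction n with
  | zero => simp [poch]
  | succ n ih =>
    rw [poch_succ, poch_succ]
    have e : poch (be - al) n * (be - al + n) * (poch (ga - al) n * (ga - al + n)) =
      (be - al + n) * (ga - al + n) * (poch (be - al) n * poch (ga - al) n) := by ring
    rw [e, ← ih, Finset.mul_sum]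
    set de := be + ga - al - 1 with hde
    set G : ℕ → ℝ := fun j => (-1) ^ j * (n.choose j : ℝ) * poch al (j + 1) *
      (poch (be + j) (n - j) * poch (ga + j) (n - j)) * poch (de + n + 1) j * (de + 1 + 2 * n) with hG
    have key : ∀ j ∈ range n,
        (-1) ^ (j + 1) * ((n + 1).choose (j + 1) : ℝ) * poch al (j + 1)
          * poch (be + (j + 1 : ℕ)) (n + 1 - (j + 1)) *
      poch (ga + (j + 1 : ℕ)) (n + 1 - (j + 1)) * poch (de + (n + 1 : ℕ)) (j + 1)
       = (be - al + n) * (ga - al + n) * ((-1) ^ (j + 1) * (n.choose (j + 1) : ℝ) * poch al (j + 1)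
          * poch (be + (j + 1 : ℕ)) (n - (j + 1)) *
      poch (ga + (j + 1 : ℕ)) (n - (j + 1)) * poch (de + n) (j + 1)) + (G (j + 1) - G j) := by
      intro j hj
      have hj' : j + 1 ≤ n := by simpa [Nat.succ_le_iff] using hj
      obtain ⟨k, rfl⟩ := Nat.exists_eq_add_of_le hj'
      have e1 : j + 1 + k + 1 - (j + 1) = k + 1 := by omega
      have e2 : j + 1 + k - (j + 1) = k := by omega
      have e3 : j + 1 + k - j = k + 1 := by omega
      simp only [hG, e1, e2, e3]
      have hch : ((j + 1 + k).choose (j + 1) : ℝ) * (j + 1) = ((j + 1 + k).choose j : ℝ) * (k + 1) := by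
        have := Nat.choose_succ_right_eq (j + 1 + k) j
        rw [e3] at this
        exact_mod_cast this
      have hch1 : ((j + 1 + k + 1).choose (j + 1) : ℝ) =
          ((j + 1 + k).choose j : ℝ) + ((j + 1 + k).choose (j + 1) : ℝ) := by
        exact_mod_cast Nat.choose_succ_succ (j + 1 + k) j
      rw [hch1]
      set P := ((j + 1 + k).choose (j + 1) : ℝ)
      have hk1 : (k : ℝ) + 1 ≠ 0 := by positivity
      have hQ : ((j + 1 + k).choose j : ℝ) = P * (j + 1) / (k + 1) := by
        rw [eq_div_iff hk1, hch]
      rw [hQ]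
      rw [poch_succ' (be + j), poch_succ' (ga + j), poch_succ (be + ((j + 1 : ℕ) : ℝ)),
        poch_succ (ga + ((j + 1 : ℕ) : ℝ)), poch_succ al (j + 1),
        poch_succ' (de + ((j + 1 + k : ℕ) : ℝ)) j, poch_succ (de + ((j + 1 + k + 1 : ℕ) : ℝ)),
        poch_succ (de + ((j + 1 + k : ℕ) : ℝ) + 1)]
      push_cast
      rw [show be + (j : ℝ) + 1 = be + (j + 1) by ring, show ga + (j : ℝ) + 1 = ga + (j + 1) by ring,
        show de + ((j : ℝ) + 1 + k + 1) = de + (j + 1 + k) + 1 by ring]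
      generalize poch (de + ((j : ℝ) + 1 + k) + 1) j = X1
      generalize poch (be + ((j : ℝ) + 1)) k = X2
      generalize poch (ga + ((j : ℝ) + 1)) k = X3
      generalize poch al (j + 1) = X4
      rw [pow_succ]
      generalize (-1 : ℝ) ^ j = X5
      rw [hde]
      field_simp
      ring
    rw [Finset.sum_range_succ, Finset.sum_range_succ', Finset.sum_congr rfl key,
      Finset.sum_add_distrib, Finset.sum_range_sub, Finset.sum_range_succ' _ n, ← Finset.mul_sum]
    simp only [hG, poch_zero, Nat.sub_self, Nat.choose_self, Nat.choose_zero_right, Nat.sub_zero,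
      Nat.cast_zero, add_zero, pow_zero, Nat.cast_one, zero_add]
    rw [poch_succ be, poch_succ ga, poch_succ (de + (n + 1 : ℕ)), pow_succ]
    have : poch al 1 = al := by simp [poch]
    rw [this]
    push_cast
    rw [show de + ((n : ℝ) + 1) = de + n + 1 by ring, hde]
    ring

noncomputable def cC (a b c d j : ℝ) (r : ℕ) : ℝ :=
  poch (a + b + j) r * poch (a + c + j) r * poch (a + d + j) r /
    (r.factorial * poch (a + b + c + d - 1 + 2 * j + r) r)

noncomputable def cI (a b c d j : ℝ) (r : ℕ) : ℝ :=
  (-1) ^ r * (poch (a + b + j) r * poch (a + c + j) r * poch (a + d + j) r) /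
    (r.factorial * poch (a + b + c + d + 2 * j) r)

lemma cC_shift (a b c d i q : ℝ) (r : ℕ) :
    cC (a + i / 2) (b + i / 2) (c + i / 2) (d + i / 2) q r = cC a b c d (i + q) r := by
  unfold cC
  congr 1
  · congr 1
    · congr 1 <;> congr 1 <;> ring
    · congr 1; ring
  · congr 2; ring

lemma wilson_eq (a b c d : ℝ) (n : ℕ) (z : ℝ) :
    wilson a b c d n z = ∑ j ∈ range (n + 1), cC a b c d j (n - j) * gpol a j z := by
  unfold wilson cC
  apply Finset.sum_congr rfl
  intro j hj
  have hj' : j ≤ n := by simpa [Nat.lt_succ_iff] using hj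
  rw [Nat.cast_sub hj']
  congr 4; ring

lemma wilson_shift (a b c d i : ℝ) (n : ℕ) (z : ℝ) :
    wilson (a + i / 2) (b + i / 2) (c + i / 2) (d + i / 2) n z =
      ∑ q ∈ range (n + 1), cC a b c d (i + q) (n - q) * gpol (a + i / 2) q z := by
  rw [wilson_eq]
  simp only [cC_shift]

lemma wilson_newton (a b c d x : ℝ) (n : ℕ) (z : ℝ) :
    wilson a b c d n z = ∑ p ∈ range (n + 1),
      wilson (a + p / 2) (b + p / 2) (c + p / 2) (d + p / 2) (n - p) (-(x + p / 2) ^ 2) *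
        gpol x p z := by
  rw [wilson_eq]
  simp only [wilson_shift]
  have h1 : ∀ j ∈ range (n + 1), cC a b c d j (n - j) * gpol a j z =
      ∑ p ∈ range (j + 1), cC a b c d j (n - j) *
      (gpol (a + p / 2) (j - p) (-(x + p / 2) ^ 2) * gpol x p z) := by
    intro j _
    rw [gpol_newton a x z j, Finset.mul_sum]
  rw [Finset.sum_congr rfl h1]
  rw [Finset.sum_comm' (t' := range (n + 1)) (s' := fun p => Finset.Ico p (n + 1))]
  · apply Finset.sum_congr rfl
    intro p hp
    have hp' : p ≤ n := by simpa [Nat.lt_succ_iff] using hp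
    rw [Finset.sum_Ico_eq_sum_range, Finset.sum_mul, show n + 1 - p = n - p + 1 by omega]
    apply Finset.sum_congr rfl
    intro q _
    rw [show n - (p + q) = n - p - q by omega, show p + q - p = q by omega]
    push_cast
    ring
  · intro j p
    simp only [Finset.mem_range, Finset.mem_Ico]
    omega

lemma wilson_at (a b c d : ℝ) (hs : ∀ z : ℤ, a + b + c + d ≠ z) (n : ℕ) :
    wilson a b c d n (-d ^ 2) = cC d b c a 0 n := by
  rw [wilson_eq]
  have hP : poch (a + b + c + d - 1 + n) n ≠ 0 := by
    apply poch_ne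
    intro z hz
    apply hs (z + 1 - n)
    push_cast
    linarith
  have hn : (n.factorial : ℝ) ≠ 0 := by positivity
  have h := saal (a - d) (a + b) (a + c) n
  have hR : cC d b c a 0 n = poch (a + d) n / (n.factorial * poch (a + b + c + d - 1 + n) n) *
      (poch (a + b - (a - d)) n * poch (a + c - (a - d)) n) := by
    unfold cC
    rw [show d + b + 0 = a + b - (a - d) by ring, show d + c + 0 = a + c - (a - d) by ring,
      show d + a + 0 = a + d by ring,
      show d + b + c + a - 1 + 2 * 0 + (n : ℝ) = a + b + c + d - 1 + n by ring]
    ring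
  rw [hR, ← h, Finset.mul_sum]
  apply Finset.sum_congr rfl
  intro j hj
  have hj' : j ≤ n := by simpa [Nat.lt_succ_iff] using hj
  obtain ⟨k, rfl⟩ := Nat.exists_eq_add_of_le hj'
  rw [gpol_poch, Nat.add_sub_cancel_left]
  unfold cC
  have e1 := poch_add (a + d) j k
  have e2 := poch_add (a + b + c + d - 1 + ((j + k : ℕ) : ℝ)) j k
  rw [e2] at hP ⊢
  rw [e1]
  have e3 : ((j + k).choose j : ℝ) = (j + k).factorial / (j.factorial * k.factorial) := by
    rw [Nat.cast_choose ℝ (Nat.le_add_right j k), Nat.add_sub_cancel_left]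
  rw [e3]
  rw [show a + b + c + d - 1 + 2 * (j : ℝ) + k = a + b + c + d - 1 + ((j + k : ℕ) : ℝ) + j by
      push_cast; ring,
    show a + b + (a + c) - (a - d) - 1 + ((j + k : ℕ) : ℝ) = a + b + c + d - 1 + ((j + k : ℕ) : ℝ) by
      ring]
  have hP1 := left_ne_zero_of_mul hP
  have hP2 := right_ne_zero_of_mul hP
  have hj0 : (j.factorial : ℝ) ≠ 0 := by positivity
  have hk0 : (k.factorial : ℝ) ≠ 0 := by positivity
  generalize poch (a + b + c + d - 1 + ((j + k : ℕ) : ℝ)) j = Y1 at *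
  generalize poch (a + b + c + d - 1 + ((j + k : ℕ) : ℝ) + j) k = Y2 at *
  field_simp

lemma wilson_symm (a b c d : ℝ) (hs : ∀ z : ℤ, a + b + c + d ≠ z) (n : ℕ) (z : ℝ) :
    wilson a b c d n z = wilson d b c a n z := by
  rw [wilson_newton a b c d d n z, wilson_eq d b c a]
  apply Finset.sum_congr rfl
  intro p _
  rw [wilson_at, cC_shift, add_zero]
  intro w hw
  apply hs (w - 2 * p)
  push_cast
  linarith

lemma wilson_swap34 (a b c d : ℝ) (n : ℕ) (z : ℝ) :
    wilson a b c d n z = wilson a b d c n z := by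
  unfold wilson
  apply Finset.sum_congr rfl
  intro p _
  rw [show (n : ℝ) + a + b + c + d - 1 + p = n + a + b + d + c - 1 + p by ring]
  ring

lemma cIC (a b c d i : ℝ) (hs : ∀ z : ℤ, a + b + c + d + 2 * i ≠ z) (n : ℕ) :
    ∑ q ∈ range (n + 1), cI a b c d i q * cC a b c d (i + q) (n - q) =
      if n = 0 then 1 else 0 := by
  rcases n with _ | n
  · simp [cI, cC, poch]
  rw [if_neg (by omega)]
  set S := a + b + c + d + 2 * i with hS
  have hP1 : poch S (n + 1) ≠ 0 := poch_ne _ _ hs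
  have hP2 : poch (S - 1 + ((n + 1 : ℕ) : ℝ)) (n + 1) ≠ 0 := by
    apply poch_ne
    intro z hz
    apply hs (z - n)
    push_cast at hz ⊢
    linarith
  have h := saal 1 1 S (n + 1)
  rw [show (1 : ℝ) - 1 = 0 by ring, poch_succ' 0, zero_mul, zero_mul,
    show 1 + S - 1 - 1 + ((n + 1 : ℕ) : ℝ) = S - 1 + ((n + 1 : ℕ) : ℝ) by ring] at h
  generalize n + 1 = N at *
  rw [← mul_zero (poch (a + b + i) N * poch (a + c + i) N * poch (a + d + i) N /
    (poch 1 N * N.factorial * poch S N * poch (S - 1 + N) N)), ← h, Finset.mul_sum]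
  apply Finset.sum_congr rfl
  intro j hj
  have hj' : j ≤ N := by simpa [Nat.lt_succ_iff] using hj
  have hone : poch 1 N ≠ 0 := by
    unfold poch
    rw [Finset.prod_ne_zero_iff]
    intro k _
    positivity
  have hN0 : (N.factorial : ℝ) ≠ 0 := by positivity
  obtain ⟨k, rfl⟩ := Nat.exists_eq_add_of_le hj'
  rw [Nat.add_sub_cancel_left]
  unfold cC cI
  have e3 : ((j + k).choose j : ℝ) = (j + k).factorial / (j.factorial * k.factorial) := by
    rw [Nat.cast_choose ℝ (Nat.le_add_right j k), Nat.add_sub_cancel_left]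
  rw [e3, poch_add S, poch_add 1, poch_add (S - 1 + ((j + k : ℕ) : ℝ)) j k, poch_add (a + b + i),
    poch_add (a + c + i), poch_add (a + d + i)]
  rw [poch_add] at hP1 hP2 hone
  rw [show a + b + c + d - 1 + 2 * (i + j : ℝ) + k = S - 1 + ((j + k : ℕ) : ℝ) + j by
      rw [hS]; push_cast; ring,
    show a + b + (i + (j : ℝ)) = a + b + i + j by ring,
    show a + c + (i + (j : ℝ)) = a + c + i + j by ring,
    show a + d + (i + (j : ℝ)) = a + d + i + j by ring, ← hS]
  have hP1a := left_ne_zero_of_mul hP1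
  have hP1b := right_ne_zero_of_mul hP1
  have hP2a := left_ne_zero_of_mul hP2
  have hP2b := right_ne_zero_of_mul hP2
  have hP3a := left_ne_zero_of_mul hone
  have hP3b := right_ne_zero_of_mul hone
  have hj0 : (j.factorial : ℝ) ≠ 0 := by positivity
  have hk0 : (k.factorial : ℝ) ≠ 0 := by positivity
  clear h hP1 hP2 hone
  generalize poch (S - 1 + ((j + k : ℕ) : ℝ)) j = Y1 at *
  generalize poch (S - 1 + ((j + k : ℕ) : ℝ) + j) k = Y2 at *
  generalize poch S j = Y3 at *
  generalize poch (S + j) k = Y4 at *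
  field_simp

lemma gG (a x i : ℝ) (n : ℕ) :
    ∑ q ∈ range (n + 1), gpol (a + i / 2) q (-(x + i / 2) ^ 2) *
      gpol (x + (i + q) / 2) (n - q) (-(a + (i + q) / 2) ^ 2) = if n = 0 then 1 else 0 := by
  have h := gpol_newton (x + i / 2) (a + i / 2) (-(x + i / 2) ^ 2) n
  have h0 : gpol (x + i / 2) n (-(x + i / 2) ^ 2) = if n = 0 then 1 else 0 := by
    rcases n with _ | n
    · simp [gpol]
    · rw [if_neg (by omega), gpol_poch, sub_self, poch_succ' 0]; simp
  rw [← h0, h]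
  apply Finset.sum_congr rfl
  intro q _
  rw [show x + i / 2 + (q : ℝ) / 2 = x + (i + q) / 2 by ring,
    show a + i / 2 + (q : ℝ) / 2 = a + (i + q) / 2 by ring]
  ring

lemma dual_entry (a b c d x : ℝ) (k n : ℕ) :
    ∑ q ∈ range (n + 1), cI a b c d k q *
      gpol (x + (k + q) / 2) (n - q) (-(a + (k + q) / 2) ^ 2) =
    (-1) ^ n * wilson (1 / 2 - a - (k + n) / 2) (1 / 2 - b - (k + n) / 2)
      (1 / 2 - c - (k + n) / 2) (1 / 2 - d - (k + n) / 2) n (-(1 / 2 - x - (k + n) / 2) ^ 2) := by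
  rw [wilson_eq, Finset.mul_sum, ← Finset.sum_range_reflect]
  apply Finset.sum_congr rfl
  intro q hq
  have hq' : q ≤ n := by simpa [Nat.lt_succ_iff] using hq
  obtain ⟨p, rfl⟩ := Nat.exists_eq_add_of_le hq'
  rw [show q + p + 1 - 1 - q = p by omega, show q + p - p = q by omega,
    show q + p - q = p by omega]
  rw [gpol_shift, gpol_poch]
  unfold cC cI
  push_cast
  rw [show (1 / 2 - a - ((k : ℝ) + (q + p)) / 2) + (1 / 2 - b - ((k : ℝ) + (q + p)) / 2) + q =
      1 - (a + b + k) - p by ring,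
    show (1 / 2 - a - ((k : ℝ) + (q + p)) / 2) + (1 / 2 - c - ((k : ℝ) + (q + p)) / 2) + q =
      1 - (a + c + k) - p by ring,
    show (1 / 2 - a - ((k : ℝ) + (q + p)) / 2) + (1 / 2 - d - ((k : ℝ) + (q + p)) / 2) + q =
      1 - (a + d + k) - p by ring,
    show (1 / 2 - a - ((k : ℝ) + (q + p)) / 2) + (1 / 2 - b - ((k : ℝ) + (q + p)) / 2) +
      (1 / 2 - c - ((k : ℝ) + (q + p)) / 2) + (1 / 2 - d - ((k : ℝ) + (q + p)) / 2) - 1 + 2 * q + p =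
      1 - (a + b + c + d + 2 * k) - p by ring,
    show (1 / 2 - a - ((k : ℝ) + (q + p)) / 2) - (1 / 2 - x - ((k : ℝ) + (q + p)) / 2) = x - a by ring,
    show (1 / 2 - a - ((k : ℝ) + (q + p)) / 2) + (1 / 2 - x - ((k : ℝ) + (q + p)) / 2) =
      1 - (x + a + (k + p)) - q by ring]
  simp only [poch_reflect]
  rw [pow_add]
  rcases neg_one_pow_eq_or ℝ p with hp | hp <;> rcases neg_one_pow_eq_or ℝ q with hq | hq <;>
    rw [hp, hq] <;> simp only [one_mul, neg_mul, mul_neg, neg_neg, mul_one, neg_div, div_neg]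

noncomputable def Hf (a b c d x : ℝ) (i k : ℕ) : ℝ :=
  if i ≤ k then wilson (a + i / 2) (b + i / 2) (c + i / 2) (d + i / 2) (k - i)
    (-(x + i / 2) ^ 2) else 0

noncomputable def Ef (a b c d x : ℝ) (k l : ℕ) : ℝ :=
  if k ≤ l then (-1) ^ (l - k) * wilson (1 / 2 - a - l / 2) (1 / 2 - b - l / 2) (1 / 2 - c - l / 2)
    (1 / 2 - d - l / 2) (l - k) (-(1 / 2 - x - l / 2) ^ 2) else 0

noncomputable def Gf (a x : ℝ) (i k : ℕ) : ℝ :=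
  if i ≤ k then gpol (a + i / 2) (k - i) (-(x + i / 2) ^ 2) else 0

noncomputable def Cf (a b c d : ℝ) (i k : ℕ) : ℝ :=
  if i ≤ k then cC a b c d i (k - i) else 0

noncomputable def Cif (a b c d : ℝ) (i k : ℕ) : ℝ :=
  if i ≤ k then cI a b c d i (k - i) else 0

/-- product of two upper triangular arrays -/
lemma sum_tri (N i k : ℕ) (hk : k < N) (f g : ℕ → ℕ → ℝ) :
    ∑ j ∈ range N, (if i ≤ j then f i j else 0) * (if j ≤ k then g j k else 0) =
      if i ≤ k then ∑ q ∈ range (k - i + 1), f i (i + q) * g (i + q) k else 0 := by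
  split_ifs with hik
  · rw [show k - i + 1 = k + 1 - i by omega,
      ← Finset.sum_Ico_eq_sum_range (fun j => f i j * g j k)]
    symm
    have hsub : Finset.Ico i (k + 1) ⊆ range N := by
      intro j; simp only [Finset.mem_Ico, Finset.mem_range]; omega
    rw [← Finset.sum_subset hsub (f := fun j => (if i ≤ j then f i j else 0) *
      (if j ≤ k then g j k else 0))]
    · apply Finset.sum_congr rfl
      intro j hj
      simp only [Finset.mem_Ico] at hj
      rw [if_pos (by omega), if_pos (by omega)]
    · intro j _ hj
      simp only [Finset.mem_Ico, not_and_or] at hj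
      rcases hj with hj | hj
      · rw [if_neg (by omega), zero_mul]
      · rw [if_neg (t := g j k) (by omega), mul_zero]
  · apply Finset.sum_eq_zero
    intro j _
    by_cases h : i ≤ j
    · rw [if_neg (t := g j k) (by omega), mul_zero]
    · rw [if_neg h, zero_mul]

noncomputable def mat (N : ℕ) (f : ℕ → ℕ → ℝ) : Matrix (Fin N) (Fin N) ℝ :=
  Matrix.of fun i j => f i j

lemma mat_mul (N : ℕ) (f g u : ℕ → ℕ → ℝ)
    (h : ∀ i k, k < N → ∑ j ∈ range N, f i j * g j k = u i k) :
    mat N f * mat N g = mat N u := by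
  ext i k
  rw [Matrix.mul_apply]
  simp only [mat, Matrix.of_apply]
  rw [← h i k k.2, Fin.sum_univ_eq_sum_range (fun j => f i j * g j k)]

lemma mat_delta (N : ℕ) : mat N (fun i k => if i ≤ k then (if k - i = 0 then 1 else 0) else 0) = 1 := by
  ext i k
  simp only [mat, Matrix.of_apply, Matrix.one_apply, Fin.ext_iff]
  split_ifs <;> first | rfl | omega

lemma H_eq (N : ℕ) (a b c d x : ℝ) :
    mat N (Gf a x) * mat N (Cf a b c d) = mat N (Hf a b c d x) := by
  apply mat_mul
  intro i k hk
  simp only [Gf, Cf, Hf]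
  rw [sum_tri N i k hk (fun i j => gpol (a + i / 2) (j - i) (-(x + i / 2) ^ 2))
    (fun j k => cC a b c d j (k - j))]
  split_ifs with hik
  · rw [wilson_shift]
    apply Finset.sum_congr rfl
    intro q _
    rw [Nat.add_sub_cancel_left, Nat.sub_add_eq]
    push_cast
    ring
  · rfl

lemma E_eq (N : ℕ) (a b c d x : ℝ) :
    mat N (Cif a b c d) * mat N (Gf x a) = mat N (Ef a b c d x) := by
  apply mat_mul
  intro i k hk
  simp only [Gf, Cif, Ef]
  rw [sum_tri N i k hk (fun i j => cI a b c d i (j - i))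
    (fun j k => gpol (x + j / 2) (k - j) (-(a + j / 2) ^ 2))]
  split_ifs with hik
  · have h := dual_entry a b c d x i (k - i)
    rw [Nat.cast_sub hik, add_sub_cancel] at h
    rw [← h]
    apply Finset.sum_congr rfl
    intro q _
    rw [Nat.add_sub_cancel_left, Nat.sub_add_eq]
    push_cast
    ring
  · rfl

lemma GG (N : ℕ) (a x : ℝ) : mat N (Gf a x) * mat N (Gf x a) = 1 := by
  rw [← mat_delta]
  apply mat_mul
  intro i k hk
  simp only [Gf]
  rw [sum_tri N i k hk (fun i j => gpol (a + i / 2) (j - i) (-(x + i / 2) ^ 2))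
    (fun j k => gpol (x + j / 2) (k - j) (-(a + j / 2) ^ 2))]
  split_ifs with hik h0
  · rw [← (gG a x i (k - i)).trans (if_pos h0)]
    apply Finset.sum_congr rfl
    intro q _
    rw [Nat.add_sub_cancel_left, Nat.sub_add_eq]
    push_cast
    ring
  · rw [← (gG a x i (k - i)).trans (if_neg h0)]
    apply Finset.sum_congr rfl
    intro q _
    rw [Nat.add_sub_cancel_left, Nat.sub_add_eq]
    push_cast
    ring
  · rfl

lemma CiC (N : ℕ) (a b c d : ℝ) (hs : ∀ z : ℤ, a + b + c + d ≠ z) :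
    mat N (Cif a b c d) * mat N (Cf a b c d) = 1 := by
  rw [← mat_delta]
  apply mat_mul
  intro i k hk
  have hs' : ∀ z : ℤ, a + b + c + d + 2 * (i : ℝ) ≠ z := by
    intro z hz
    apply hs (z - 2 * i)
    push_cast
    linarith
  simp only [Cif, Cf]
  rw [sum_tri N i k hk (fun i j => cI a b c d i (j - i))
    (fun j k => cC a b c d j (k - j))]
  by_cases hik : i ≤ k
  · rw [if_pos hik, if_pos hik, ← cIC a b c d i hs' (k - i)]
    apply Finset.sum_congr rfl
    intro q _
    rw [Nat.add_sub_cancel_left, Nat.sub_add_eq]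
    push_cast
    ring
  · rw [if_neg hik, if_neg hik]

lemma HE (N : ℕ) (a b c d x : ℝ) (hs : ∀ z : ℤ, a + b + c + d ≠ z) :
    mat N (Hf a b c d x) * mat N (Ef a b c d x) = 1 := by
  rw [← H_eq, ← E_eq, Matrix.mul_assoc, ← Matrix.mul_assoc (mat N (Cf a b c d)),
    mul_eq_one_comm.mp (CiC N a b c d hs), Matrix.one_mul, GG]

lemma H_det (N : ℕ) (a b c d x : ℝ) : (mat N (Hf a b c d x)).det = 1 := by
  rw [Matrix.det_of_isUpperTriangular]
  · apply Finset.prod_eq_one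
    intro i _
    simp [mat, Hf, wilson, gpol, poch]
  · intro i j hij
    have : (j : ℕ) < i := hij
    simp only [mat, Hf, Matrix.of_apply]
    rw [if_neg (by omega)]

lemma prod_Icc_poch (n : ℕ) (x : ℝ) :
    ∏ l ∈ Finset.Icc 1 (n - 1), poch (2 * x + l) l = ∏ i : Fin n, poch (2 * x + (i : ℕ)) i := by
  rw [Fin.prod_univ_eq_prod_range (fun i => poch (2 * x + (i : ℕ)) i)]
  rcases n with _ | n
  · simp
  · rw [Finset.prod_range_succ', Finset.range_eq_Ico, Finset.prod_Ico_add' (c := 1)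
      (f := fun i => poch (2 * x + (i : ℕ)) i)]
    simp [poch_zero, ← Finset.Ico_add_one_right_eq_Icc]

lemma gpol_diag (x : ℝ) (i : ℕ) : gpol x i (-(x + i) ^ 2) = poch (2 * x + i) i := by
  have h1 : poch (x - (x + i)) i = (-1) ^ i * i.factorial := by
    rw [show x - (x + i) = 1 - 1 - (i : ℝ) by ring, poch_reflect]
    congr 1
    induction i with
    | zero => simp [poch]
    | succ i ih => rw [poch_succ, ih, Nat.factorial_succ]; push_cast; ring
  rw [gpol_poch, h1, show x + (x + i) = 2 * x + i by ring]
  have : (i.factorial : ℝ) ≠ 0 := by positivity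
  rcases neg_one_pow_eq_or ℝ i with hp | hp <;> rw [hp] <;> field_simp

lemma gpol_zero (x : ℝ) (i p : ℕ) (h : i < p) : gpol x p (-(x + i) ^ 2) = 0 := by
  unfold gpol
  rw [Finset.prod_eq_zero (Finset.mem_range.mpr h), mul_zero]
  ring

lemma casorati_eq (a b c d x : ℝ) (n m : ℕ)
    (h : (∏ l ∈ Finset.Icc 1 (n - 1), poch (2 * x + l) l) ≠ 0) :
    wilsonCasorati a b c d n m x = (mat n (fun i j => Hf a b c d x i (m + j))).det := by
  unfold wilsonCasorati
  rw [div_eq_iff h, prod_Icc_poch, mul_comm]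
  have hL : (mat n (fun i p => gpol x p (-(x + (i : ℕ)) ^ 2))).det =
      ∏ i : Fin n, poch (2 * x + (i : ℕ)) i := by
    rw [Matrix.det_of_isLowerTriangular]
    · apply Finset.prod_congr rfl
      intro i _
      simp only [mat, Matrix.of_apply]
      exact gpol_diag x i
    · intro i j hij
      have : (i : ℕ) < j := hij
      simp only [mat, Matrix.of_apply]
      exact gpol_zero x i j this
  rw [← hL, ← Matrix.det_mul]
  congr 1
  ext i j
  rw [Matrix.mul_apply]
  simp only [mat, Matrix.of_apply]
  rw [Fin.sum_univ_eq_sum_range (fun p => gpol x p (-(x + (i : ℕ)) ^ 2) * Hf a b c d x p (m + j)) n]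
  rw [wilson_newton a b c d x]
  have e1 : ∀ p ∈ range (m + (j : ℕ) + 1),
      wilson (a + p / 2) (b + p / 2) (c + p / 2) (d + p / 2) (m + j - p) (-(x + p / 2) ^ 2) *
        gpol x p (-(x + (i : ℕ)) ^ 2) = gpol x p (-(x + (i : ℕ)) ^ 2) * Hf a b c d x p (m + j) := by
    intro p hp
    have hp' : p ≤ m + j := by simpa [Nat.lt_succ_iff] using hp
    rw [Hf, if_pos hp', mul_comm]
  rw [Finset.sum_congr rfl e1]
  rw [Finset.sum_subset (s₁ := range (m + (j : ℕ) + 1)) (s₂ := range (m + (j : ℕ) + 1 + n)),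
    Finset.sum_subset (s₁ := range n) (s₂ := range (m + (j : ℕ) + 1 + n))]
  · intro p; simp only [Finset.mem_range]; omega
  · intro p _ hp
    rw [gpol_zero, zero_mul]
    simp only [Finset.mem_range] at hp
    have := i.2
    omega
  · intro p; simp only [Finset.mem_range]; omega
  · intro p _ hp
    simp only [Finset.mem_range] at hp
    rw [Hf, if_neg (by omega), mul_zero]

lemma rot_val (N t : ℕ) (i : Fin N) : (((finRotate N) ^ t) i : ℕ) = (i + t) % N := by
  rcases N with _ | N
  · exact i.elim0
  induction t with
  | zero => simp [Nat.mod_eq_of_lt i.2]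
  | succ t ih =>
    rw [pow_succ', Equiv.Perm.mul_apply, finRotate_succ_apply, Fin.val_add, ih]
    rcases N with _ | N
    · simp [Nat.mod_one]
    · simp [← add_assoc]

lemma sign_rot (n m : ℕ) : Equiv.Perm.sign ((finRotate (n + m)) ^ m) = (-1) ^ (n * m) := by
  rw [map_pow, sign_finRotate, ← pow_mul]
  rcases m with _ | m
  · simp
  · have h : (n + (m + 1) - 1) * (m + 1) = n * (m + 1) + m * (m + 1) := by
      rw [← add_mul]; congr 1
    rw [h, pow_add, (Nat.even_mul_succ_self m).neg_one_pow, mul_one]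

lemma jacobi (n m : ℕ) (H E : ℕ → ℕ → ℝ) (hHE : mat (n + m) H * mat (n + m) E = 1)
    (hH : (mat (n + m) H).det = 1) :
    (mat n (fun i j => H i (m + j))).det =
      (-1) ^ (n * m) * (mat m (fun i j => E i (n + j))).det := by
  set ρ := (finRotate (n + m)) ^ m with hρ
  have hr : ∀ i : Fin (n + m), (ρ i : ℕ) = (i + m) % (n + m) := rot_val _ _
  have hr1 : ∀ i : Fin n, (ρ (Fin.castAdd m i) : ℕ) = m + i := by
    intro i
    rw [hr, Fin.val_castAdd, Nat.mod_eq_of_lt (by omega), add_comm]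
  have hr2 : ∀ i : Fin m, (ρ (Fin.natAdd n i) : ℕ) = i := by
    intro i
    rw [hr, Fin.val_natAdd, show n + (i : ℕ) + m = i + (n + m) by ring, Nat.add_mod_right,
      Nat.mod_eq_of_lt (by omega)]
  set K : Matrix (Fin (n + m)) (Fin (n + m)) ℝ :=
    Matrix.of fun i j => if (j : ℕ) < n then (if i = ρ j then 1 else 0) else E i j with hK
  have hHK : ∀ i j, (mat (n + m) H * K) i j =
      if (j : ℕ) < n then H i (ρ j) else if i = j then 1 else 0 := by
    intro i j
    split_ifs with h1 h2
    · simp [Matrix.mul_apply, hK, h1, mat]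
    · have := congrFun (congrFun hHE i) j
      rw [Matrix.mul_apply, Matrix.one_apply, if_pos h2] at this
      rw [Matrix.mul_apply, ← this]
      simp [hK, h1, mat]
    · have := congrFun (congrFun hHE i) j
      rw [Matrix.mul_apply, Matrix.one_apply, if_neg h2] at this
      rw [Matrix.mul_apply, ← this]
      simp [hK, h1, mat]
  have d1 : (mat (n + m) H * K).det = (mat n (fun i j => H i (m + j))).det := by
    rw [← Matrix.det_submatrix_equiv_self finSumFinEquiv]
    have : (mat (n + m) H * K).submatrix finSumFinEquiv finSumFinEquiv =
        Matrix.fromBlocks (mat n (fun i j => H i (m + j))) 0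
          (Matrix.of fun (i : Fin m) (j : Fin n) => H (n + i) (m + j)) 1 := by
      ext i j
      rw [Matrix.submatrix_apply, hHK]
      rcases i with i | i <;> rcases j with j | j
      · simp [hr1, mat]
      · simp [Fin.ext_iff]; omega
      · simp [hr1]
      · simp [Matrix.one_apply]
    rw [this, Matrix.det_fromBlocks_zero₁₂, Matrix.det_one, mul_one]
  have d2 : (K.submatrix ρ id).det = (mat m (fun i j => E i (n + j))).det := by
    rw [← Matrix.det_submatrix_equiv_self finSumFinEquiv]
    have : (K.submatrix ρ id).submatrix finSumFinEquiv finSumFinEquiv =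
        Matrix.fromBlocks 1 (Matrix.of fun (i : Fin n) (j : Fin m) => E (m + i) (n + j)) 0
         (mat m (fun i j => E i (n + j))) := by
      ext i j
      rw [Matrix.submatrix_apply, Matrix.submatrix_apply]
      simp only [hK, Matrix.of_apply, id]
      rcases i with i | i <;> rcases j with j | j
      · simp [Matrix.one_apply]
      · simp [hr1]
      · simp [Fin.ext_iff]; omega
      · simp [hr2, mat]
    rw [this, Matrix.det_fromBlocks_zero₂₁, Matrix.det_one, one_mul]
  rw [← d1, ← d2, Matrix.det_mul, hH, one_mul, Matrix.det_permute, hρ, sign_rot]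
  push_cast
  rw [← mul_assoc, ← pow_add, Even.neg_one_pow ⟨_, rfl⟩, one_mul]

lemma wilson_perm (a b c d : ℝ) (hs : ∀ z : ℤ, a + b + c + d ≠ z) (n : ℕ) (z : ℝ) :
    wilson d b a c n z = wilson a b c d n z := by
  rw [wilson_swap34, wilson_symm a b c d hs]

lemma E_det (a b c d x : ℝ) (n m : ℕ) :
    (mat m (fun i j => Ef (a - ((n : ℝ) + m) / 2) (b - ((n : ℝ) + m) / 2)
        (c - ((n : ℝ) + m) / 2) (d - ((n : ℝ) + m) / 2) (x + a - ((n : ℝ) + m) / 2) i (n + j))).det =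
      (-1) ^ (n * m) *
      (mat m (fun i j => Hf (-a + 1) (-b + 1) (-c + 1) (-d + 1) (-x - a + 1) i (n + j))).det := by
  rw [← Matrix.det_transpose, ← Matrix.det_submatrix_equiv_self Fin.revPerm]
  set M := mat m (fun i j => Hf (-a + 1) (-b + 1) (-c + 1) (-d + 1) (-x - a + 1) i (n + j)) with hM
  have h1 := Matrix.det_mul_row (fun j : Fin m => (-1 : ℝ) ^ (j : ℕ)) M
  have h2 := Matrix.det_mul_column (fun i : Fin m => (-1 : ℝ) ^ (n + (i : ℕ)))
    (Matrix.of fun i j : Fin m => (-1 : ℝ) ^ (j : ℕ) * M i j)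
  rw [h1, ← mul_assoc, ← Finset.prod_mul_distrib] at h2
  have h3 : ∏ i : Fin m, ((-1 : ℝ) ^ (n + (i : ℕ)) * (-1) ^ (i : ℕ)) = (-1) ^ (n * m) := by
    have : ∀ i : Fin m, (-1 : ℝ) ^ (n + (i : ℕ)) * (-1) ^ (i : ℕ) = (-1) ^ n := by
      intro i
      rw [pow_add, mul_assoc, ← pow_add, Even.neg_one_pow ⟨_, rfl⟩, mul_one]
    rw [Finset.prod_congr rfl (fun i _ => this i)]
    simp [pow_mul]
  rw [h3] at h2
  rw [← h2]
  congr 1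
  ext i j
  simp only [Matrix.submatrix_apply, Matrix.transpose_apply, mat, Matrix.of_apply, Ef, Hf, hM,
    Fin.revPerm_apply, Fin.val_rev]
  have hi := i.2
  have hj := j.2
  by_cases hij : (i : ℕ) ≤ n + j
  · rw [if_pos (by omega), if_pos hij]
    have e1 : n + (m - ((i : ℕ) + 1)) - (m - (j + 1)) = n + j - i := by omega
    have e2 : ((n + (m - ((i : ℕ) + 1)) : ℕ) : ℝ) = n + m - i - 1 := by
      rw [Nat.cast_add, Nat.cast_sub (by omega)]; push_cast; ring
    rw [e1, e2, ← mul_assoc]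
    have e3 : (-1 : ℝ) ^ (n + j - (i : ℕ)) = (-1) ^ (n + (i : ℕ)) * (-1) ^ (j : ℕ) := by
      rw [← pow_add]
      have : n + (i : ℕ) + j = (n + j - i) + (i + i) := by omega
      rw [this, pow_add _ _ ((i : ℕ) + i), Even.neg_one_pow (n := (i : ℕ) + i) ⟨_, rfl⟩, mul_one]
    rw [e3]
    congr 1
    congr 1 <;> ring
  · rw [if_neg (by omega), if_neg hij]; simp

/-- the symmetry of normalized Casorati determinants of Wilson
polynomials, with `h = (n+m)/2`. -/
theorem wilson_casorati_symmetry (n m : ℕ) (x a b c d : ℝ)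
    (habcd : ∀ z : ℤ, a + b + c + d ≠ (z : ℝ))
    (h1 : (∏ l ∈ Finset.Icc 1 (n - 1),
      poch (2 * (x + a - ((n : ℝ) + m) / 2) + l) l) ≠ 0)
    (h2 : (∏ l ∈ Finset.Icc 1 (m - 1),
      poch (2 * (-x - a + 1) + l) l) ≠ 0) :
    wilsonCasorati (a - ((n : ℝ) + m) / 2) (b - ((n : ℝ) + m) / 2)
        (c - ((n : ℝ) + m) / 2) (d - ((n : ℝ) + m) / 2)
        n m (x + a - ((n : ℝ) + m) / 2)
    = wilsonCasorati (-d + 1) (-b + 1) (-a + 1) (-c + 1) m n (-x - a + 1) := by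
  have hs1 : ∀ z : ℤ, (a - ((n : ℝ) + m) / 2) + (b - ((n : ℝ) + m) / 2) +
        (c - ((n : ℝ) + m) / 2) + (d - ((n : ℝ) + m) / 2) ≠ z := by
    intro z hz
    apply habcd (z + 2 * n + 2 * m)
    push_cast
    linarith
  have hs2 : ∀ z : ℤ, (-a + 1) + (-b + 1) + (-c + 1) + (-d + 1) ≠ (z : ℝ) := by
    intro z hz
    apply habcd (4 - z)
    push_cast
    linarith
  have hR : wilsonCasorati (-d + 1) (-b + 1) (-a + 1) (-c + 1) m n (-x - a + 1) =
      wilsonCasorati (-a + 1) (-b + 1) (-c + 1) (-d + 1) m n (-x - a + 1) := by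
    unfold wilsonCasorati
    simp only [wilson_perm _ _ _ _ hs2]
  rw [hR, casorati_eq _ _ _ _ _ _ _ h1, casorati_eq _ _ _ _ _ _ _ h2,
    jacobi n m _ _ (HE (n + m) _ _ _ _ _ hs1) (H_det _ _ _ _ _ _), E_det,
    ← mul_assoc, ← pow_add, Even.neg_one_pow ⟨_, rfl⟩, one_mul]
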